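/- arXiv:0911.5030 — 2 statements merged into one kernel-verified Lean document; each statement's English description precedes it below -/
import Mathlib

section
/- Let N = 5 and α ∈ ℝ. Define Ψ : {−1,+1}⁵ → ℂ by: Ψ = α + α³ on the configuration (−,−,−,−,−); Ψ = 1 + α² on the 5 cyclic shifts of (−,−,−,+,+); Ψ = 2 on the 5 cyclic shifts of (−,−,+,−,+); Ψ = 2α on the 5 cyclic shifts of (−,+,+,+,+); and Ψ(μ) = 0 for all other configurations μ. Then H(α) Ψ = −(5/4)(3+α²) · Ψ. -/
/-!
The Hamiltonian commutes with translations and with the parity `∏ μ_j`, since it flips spins in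
pairs. `Psi5` is translation invariant and lives in the sector `∏ μ_j = -1`, whose configurations
form exactly four translation orbits for `N = 5`. The eigenvalue equation thus reduces to four
scalar identities, the rows of the `4 × 4` matrix by which the Hamiltonian acts on
translation-invariant vectors of that sector.
-/

open Finset

/-- Spin configurations of length `N`: maps `ℤ/N → {−1,+1}` (spins encoded as units of `ℤ`). -/
abbrev Config (N : ℕ) : Type := ZMod N → ℤˣ

/-- The state space `V_N`: complex-valued functions on configurations. -/
abbrev StateSpace (N : ℕ) : Type := Config N → ℂ

/-- The spin value `μ_j` as a complex number (`+1` or `−1`). -/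
def spin {N : ℕ} (μ : Config N) (j : ZMod N) : ℂ := ((μ j : ℤ) : ℂ)

/-- Flip the spin at site `j`. -/
def flipAt {N : ℕ} (μ : Config N) (j : ZMod N) : Config N :=
  Function.update μ j (-(μ j))

/-- `μ^{(j,j+1)}`: the configuration `μ` with the spins at sites `j` and `j+1` (mod `N`) flipped. -/
def flipPair {N : ℕ} (μ : Config N) (j : ZMod N) : Config N :=
  flipAt (flipAt μ j) (j + 1)

/-- The periodic XYZ Hamiltonian with real couplings `Jx, Jy, Jz`:
`(H Ψ)(μ) = −(1/2) Σ_j [(Jx − Jy μ_j μ_{j+1}) Ψ(μ^{(j,j+1)}) + Jz μ_j μ_{j+1} Ψ(μ)]`. -/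
noncomputable def Hxyz (N : ℕ) [NeZero N] (Jx Jy Jz : ℝ) (Ψ : StateSpace N) : StateSpace N :=
  fun μ => -(1/2 : ℂ) * ∑ j : ZMod N,
    (((Jx : ℂ) - (Jy : ℂ) * spin μ j * spin μ (j + 1)) * Ψ (flipPair μ j)
      + (Jz : ℂ) * spin μ j * spin μ (j + 1) * Ψ μ)

/-- `H(α)`: the XYZ Hamiltonian with `Jx = 1+α`, `Jy = 1−α`, `Jz = (α²−1)/2`. -/
noncomputable def Halpha (N : ℕ) [NeZero N] (α : ℝ) : StateSpace N → StateSpace N :=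
  Hxyz N (1 + α) (1 - α) ((α ^ 2 - 1) / 2)

/-- `ν` is a cyclic shift of `c`: `ν_j = c_{j+k}` for some `k`. -/
def isShiftOf {N : ℕ} (ν c : Config N) : Prop := ∃ k : ZMod N, ∀ j, ν j = c (j + k)

instance {N : ℕ} [NeZero N] (ν c : Config N) : Decidable (isShiftOf ν c) :=
  inferInstanceAs (Decidable (∃ k : ZMod N, ∀ j, ν j = c (j + k)))

/-- The configuration whose spins are `+1` exactly on the set `s`. -/
def cfgOfPlus (N : ℕ) (s : Finset (ZMod N)) : Config N := fun j => if j ∈ s then 1 else -1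

/-- The `N = 5` eigenvector: `α + α³` on `(−,−,−,−,−)`, `1 + α²` on the cyclic shifts of
`(−,−,−,+,+)`, `2` on the cyclic shifts of `(−,−,+,−,+)`, `2α` on the cyclic shifts of
`(−,+,+,+,+)`, and `0` elsewhere. -/
noncomputable def Psi5 (α : ℝ) : StateSpace 5 := fun μ =>
  if μ = cfgOfPlus 5 ∅ then ((α + α ^ 3 : ℝ) : ℂ)
  else if isShiftOf μ (cfgOfPlus 5 {3, 4}) then ((1 + α ^ 2 : ℝ) : ℂ)
  else if isShiftOf μ (cfgOfPlus 5 {2, 4}) then 2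
  else if isShiftOf μ (cfgOfPlus 5 {1, 2, 3, 4}) then ((2 * α : ℝ) : ℂ)
  else 0

section Shift

variable {N : ℕ}

/-- The translation of a configuration by `k` sites, `(shift k μ)_j = μ_{j+k}`; it turns the
relation `isShiftOf` into an action of `ℤ/N`. -/
def shift (k : ZMod N) (μ : Config N) : Config N := fun j => μ (j + k)

/-- Translation-invariant (zero-momentum) vectors of the state space. -/
def IsShiftInvariant (Ψ : StateSpace N) : Prop := ∀ k μ, Ψ (shift k μ) = Ψ μ

lemma shift_shift (k l : ZMod N) (μ : Config N) : shift k (shift l μ) = shift (k + l) μ := by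
  funext j
  simp only [shift, add_assoc]

lemma shift_zero (μ : Config N) : shift 0 μ = μ := by
  funext j
  simp only [shift, add_zero]

lemma shift_injective (k : ZMod N) : Function.Injective (shift k) :=
  Function.LeftInverse.injective (g := shift (-k)) fun μ => by
    rw [shift_shift, neg_add_cancel, shift_zero]

lemma isShiftOf_iff_exists_eq_shift {μ c : Config N} : isShiftOf μ c ↔ ∃ k, μ = shift k c := by
  simp only [isShiftOf, funext_iff, shift]

lemma isShiftOf_shift_iff {k : ZMod N} {μ c : Config N} :
    isShiftOf (shift k μ) c ↔ isShiftOf μ c := by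
  simp only [isShiftOf_iff_exists_eq_shift]
  constructor
  · rintro ⟨l, hl⟩
    exact ⟨-k + l, by rw [← shift_shift, ← hl, shift_shift, neg_add_cancel, shift_zero]⟩
  · rintro ⟨l, rfl⟩
    exact ⟨k + l, shift_shift k l c⟩

lemma IsShiftInvariant.eq_of_isShiftOf {Ψ : StateSpace N} (hΨ : IsShiftInvariant Ψ)
    {μ c : Config N} (h : isShiftOf μ c) : Ψ μ = Ψ c := by
  obtain ⟨k, rfl⟩ := isShiftOf_iff_exists_eq_shift.mp h
  exact hΨ k c

lemma flipAt_shift (k j : ZMod N) (μ : Config N) :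
    flipAt (shift k μ) j = shift k (flipAt μ (j + k)) := by
  funext i
  simp only [flipAt, shift, Function.update_apply, add_left_inj]

lemma flipPair_shift (k j : ZMod N) (μ : Config N) :
    flipPair (shift k μ) j = shift k (flipPair μ (j + k)) := by
  rw [flipPair, flipAt_shift, flipAt_shift, add_right_comm, flipPair]

lemma IsShiftInvariant.map_Hxyz [NeZero N] {Ψ : StateSpace N} (hΨ : IsShiftInvariant Ψ)
    (Jx Jy Jz : ℝ) : IsShiftInvariant (Hxyz N Jx Jy Jz Ψ) := by
  intro k μ
  unfold Hxyz
  congr 1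
  refine Fintype.sum_equiv (Equiv.addRight k) _ _ fun j => ?_
  simp only [flipPair_shift, hΨ k, spin, shift, Equiv.coe_addRight, add_right_comm]

end Shift

section Parity

variable {N : ℕ} [NeZero N]

lemma prod_shift (k : ZMod N) (μ : Config N) : ∏ j, shift k μ j = ∏ j, μ j :=
  Equiv.prod_comp (Equiv.addRight k) μ

lemma prod_eq_of_isShiftOf {μ c : Config N} (h : isShiftOf μ c) : ∏ j, μ j = ∏ j, c j := by
  obtain ⟨k, rfl⟩ := isShiftOf_iff_exists_eq_shift.mp h
  exact prod_shift k c

lemma prod_flipAt (μ : Config N) (j : ZMod N) : ∏ i, flipAt μ j i = -∏ i, μ i := by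
  rw [flipAt, prod_update_of_mem (mem_univ j), neg_mul, sdiff_singleton_eq_erase,
    mul_prod_erase univ μ (mem_univ j)]

lemma prod_flipPair (μ : Config N) (j : ZMod N) : ∏ i, flipPair μ j i = ∏ i, μ i := by
  rw [flipPair, prod_flipAt, prod_flipAt, neg_neg]

lemma Hxyz_apply_eq_zero_of_prod_eq {Ψ : StateSpace N} {ε : ℤˣ}
    (hΨ : ∀ μ, ∏ j, μ j = ε → Ψ μ = 0) (Jx Jy Jz : ℝ) {μ : Config N} (hμ : ∏ j, μ j = ε) :
    Hxyz N Jx Jy Jz Ψ μ = 0 := by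
  have hflip (j : ZMod N) : Ψ (flipPair μ j) = 0 := hΨ _ ((prod_flipPair μ j).trans hμ)
  simp only [Hxyz, hΨ μ hμ, hflip, mul_zero, add_zero, sum_const_zero]

end Parity

lemma spin_mul_spin {N : ℕ} (μ : Config N) (i j : ZMod N) :
    spin μ i * spin μ j = if μ i = μ j then 1 else -1 := by
  rcases Int.units_eq_one_or (μ i) with hi | hi <;>
    rcases Int.units_eq_one_or (μ j) with hj | hj <;>
    simp +decide [spin, hi, hj]

lemma Hxyz_apply_eq_sum_ite {N : ℕ} [NeZero N] (Jx Jy Jz : ℝ) (Ψ : StateSpace N)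
    (μ : Config N) :
    Hxyz N Jx Jy Jz Ψ μ = -(1 / 2) * ∑ j, if μ j = μ (j + 1)
      then (Jx - Jy) * Ψ (flipPair μ j) + Jz * Ψ μ
      else (Jx + Jy) * Ψ (flipPair μ j) - Jz * Ψ μ := by
  unfold Hxyz
  congr 1
  refine sum_congr rfl fun j _ => ?_
  rw [mul_assoc (Jy : ℂ), mul_assoc (Jz : ℂ), spin_mul_spin]
  split_ifs <;> ring

section FiveSites

lemma eq_or_isShiftOf_of_prod_eq_neg_one {μ : Config 5} (hμ : ∏ j, μ j = -1) :
    μ = cfgOfPlus 5 ∅ ∨ isShiftOf μ (cfgOfPlus 5 {3, 4}) ∨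
      isShiftOf μ (cfgOfPlus 5 {2, 4}) ∨ isShiftOf μ (cfgOfPlus 5 {1, 2, 3, 4}) := by
  decide +kernel +revert

lemma sum_zmod_five {M : Type*} [AddCommMonoid M] (f : ZMod 5 → M) :
    ∑ j, f j = f 0 + f 1 + f 2 + f 3 + f 4 :=
  Fin.sum_univ_five f

variable {Ψ : StateSpace 5}

lemma IsShiftInvariant.Hxyz_apply_cfgOfPlus_empty (hΨ : IsShiftInvariant Ψ)
    (Jx Jy Jz : ℝ) :
    Hxyz 5 Jx Jy Jz Ψ (cfgOfPlus 5 ∅) =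
      -(1 / 2) * (5 * (Jx - Jy) * Ψ (cfgOfPlus 5 {3, 4}) + 5 * Jz * Ψ (cfgOfPlus 5 ∅)) := by
  have hflip (j : ZMod 5) : Ψ (flipPair (cfgOfPlus 5 ∅) j) = Ψ (cfgOfPlus 5 {3, 4}) :=
    hΨ.eq_of_isShiftOf (by decide +revert)
  rw [Hxyz_apply_eq_sum_ite, sum_zmod_five]
  simp +decide only [hflip, if_true]
  ring

lemma IsShiftInvariant.Hxyz_apply_cfgOfPlus_three_four (hΨ : IsShiftInvariant Ψ)
    (Jx Jy Jz : ℝ) :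
    Hxyz 5 Jx Jy Jz Ψ (cfgOfPlus 5 {3, 4}) =
      -(1 / 2) * ((Jx - Jy) * (Ψ (cfgOfPlus 5 ∅) + 2 * Ψ (cfgOfPlus 5 {1, 2, 3, 4})) +
        2 * (Jx + Jy) * Ψ (cfgOfPlus 5 {2, 4}) + Jz * Ψ (cfgOfPlus 5 {3, 4})) := by
  have flip₀ : Ψ (flipPair (cfgOfPlus 5 {3, 4}) 0) = Ψ (cfgOfPlus 5 {1, 2, 3, 4}) :=
    hΨ.eq_of_isShiftOf (by decide)
  have flip₁ : Ψ (flipPair (cfgOfPlus 5 {3, 4}) 1) = Ψ (cfgOfPlus 5 {1, 2, 3, 4}) :=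
    hΨ.eq_of_isShiftOf (by decide)
  have flip₂ : Ψ (flipPair (cfgOfPlus 5 {3, 4}) 2) = Ψ (cfgOfPlus 5 {2, 4}) :=
    hΨ.eq_of_isShiftOf (by decide)
  have flip₃ : Ψ (flipPair (cfgOfPlus 5 {3, 4}) 3) = Ψ (cfgOfPlus 5 ∅) :=
    hΨ.eq_of_isShiftOf (by decide)
  have flip₄ : Ψ (flipPair (cfgOfPlus 5 {3, 4}) 4) = Ψ (cfgOfPlus 5 {2, 4}) :=
    hΨ.eq_of_isShiftOf (by decide)
  rw [Hxyz_apply_eq_sum_ite, sum_zmod_five, flip₀, flip₁, flip₂, flip₃, flip₄]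
  simp +decide only [if_true, if_false]
  ring

lemma IsShiftInvariant.Hxyz_apply_cfgOfPlus_two_four (hΨ : IsShiftInvariant Ψ)
    (Jx Jy Jz : ℝ) :
    Hxyz 5 Jx Jy Jz Ψ (cfgOfPlus 5 {2, 4}) =
      -(1 / 2) * ((Jx - Jy) * Ψ (cfgOfPlus 5 {1, 2, 3, 4}) +
        2 * (Jx + Jy) * (Ψ (cfgOfPlus 5 {3, 4}) + Ψ (cfgOfPlus 5 {2, 4})) -
        3 * Jz * Ψ (cfgOfPlus 5 {2, 4})) := by
  have flip₀ : Ψ (flipPair (cfgOfPlus 5 {2, 4}) 0) = Ψ (cfgOfPlus 5 {1, 2, 3, 4}) :=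
    hΨ.eq_of_isShiftOf (by decide)
  have flip₁ : Ψ (flipPair (cfgOfPlus 5 {2, 4}) 1) = Ψ (cfgOfPlus 5 {2, 4}) :=
    hΨ.eq_of_isShiftOf (by decide)
  have flip₂ : Ψ (flipPair (cfgOfPlus 5 {2, 4}) 2) = Ψ (cfgOfPlus 5 {3, 4}) :=
    hΨ.eq_of_isShiftOf (by decide)
  have flip₃ : Ψ (flipPair (cfgOfPlus 5 {2, 4}) 3) = Ψ (cfgOfPlus 5 {3, 4}) :=
    hΨ.eq_of_isShiftOf (by decide)
  have flip₄ : Ψ (flipPair (cfgOfPlus 5 {2, 4}) 4) = Ψ (cfgOfPlus 5 {2, 4}) :=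
    hΨ.eq_of_isShiftOf (by decide)
  rw [Hxyz_apply_eq_sum_ite, sum_zmod_five, flip₀, flip₁, flip₂, flip₃, flip₄]
  simp +decide only [if_true, if_false]
  ring

lemma IsShiftInvariant.Hxyz_apply_cfgOfPlus_one_two_three_four (hΨ : IsShiftInvariant Ψ)
    (Jx Jy Jz : ℝ) :
    Hxyz 5 Jx Jy Jz Ψ (cfgOfPlus 5 {1, 2, 3, 4}) =
      -(1 / 2) * ((Jx - Jy) * (2 * Ψ (cfgOfPlus 5 {3, 4}) + Ψ (cfgOfPlus 5 {2, 4})) +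
        2 * (Jx + Jy) * Ψ (cfgOfPlus 5 {1, 2, 3, 4}) +
        Jz * Ψ (cfgOfPlus 5 {1, 2, 3, 4})) := by
  have flip₀ : Ψ (flipPair (cfgOfPlus 5 {1, 2, 3, 4}) 0) = Ψ (cfgOfPlus 5 {1, 2, 3, 4}) :=
    hΨ.eq_of_isShiftOf (by decide)
  have flip₁ : Ψ (flipPair (cfgOfPlus 5 {1, 2, 3, 4}) 1) = Ψ (cfgOfPlus 5 {3, 4}) :=
    hΨ.eq_of_isShiftOf (by decide)
  have flip₂ : Ψ (flipPair (cfgOfPlus 5 {1, 2, 3, 4}) 2) = Ψ (cfgOfPlus 5 {2, 4}) :=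
    hΨ.eq_of_isShiftOf (by decide)
  have flip₃ : Ψ (flipPair (cfgOfPlus 5 {1, 2, 3, 4}) 3) = Ψ (cfgOfPlus 5 {3, 4}) :=
    hΨ.eq_of_isShiftOf (by decide)
  have flip₄ : Ψ (flipPair (cfgOfPlus 5 {1, 2, 3, 4}) 4) = Ψ (cfgOfPlus 5 {1, 2, 3, 4}) :=
    hΨ.eq_of_isShiftOf (by decide)
  rw [Hxyz_apply_eq_sum_ite, sum_zmod_five, flip₀, flip₁, flip₂, flip₃, flip₄]
  simp +decide only [if_true, if_false]
  ring

end FiveSites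

section Psi5

variable (α : ℝ)

lemma Psi5_cfgOfPlus_empty : Psi5 α (cfgOfPlus 5 ∅) = α + α ^ 3 := by
  simp [Psi5]

lemma Psi5_cfgOfPlus_three_four : Psi5 α (cfgOfPlus 5 {3, 4}) = 1 + α ^ 2 := by
  simp +decide [Psi5]

lemma Psi5_cfgOfPlus_two_four : Psi5 α (cfgOfPlus 5 {2, 4}) = 2 := by
  simp +decide [Psi5]

lemma Psi5_cfgOfPlus_one_two_three_four : Psi5 α (cfgOfPlus 5 {1, 2, 3, 4}) = 2 * α := by
  simp +decide [Psi5]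

lemma isShiftInvariant_Psi5 : IsShiftInvariant (Psi5 α) := by
  intro k μ
  have hempty : shift k μ = cfgOfPlus 5 ∅ ↔ μ = cfgOfPlus 5 ∅ :=
    (shift_injective k).eq_iff (b := cfgOfPlus 5 ∅)
  simp only [Psi5, hempty, isShiftOf_shift_iff]

lemma Psi5_eq_zero_of_prod_eq_one {μ : Config 5} (hμ : ∏ j, μ j = 1) : Psi5 α μ = 0 := by
  have not_shift {c : Config 5} (hc : ∏ j, c j = -1) : ¬isShiftOf μ c := fun h =>
    absurd (hμ.symm.trans ((prod_eq_of_isShiftOf h).trans hc)) (by decide)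
  have ne_empty : μ ≠ cfgOfPlus 5 ∅ := by
    rintro rfl
    exact absurd hμ (by decide)
  rw [Psi5, if_neg ne_empty, if_neg (not_shift (by decide)), if_neg (not_shift (by decide)),
    if_neg (not_shift (by decide))]

end Psi5

/-- For `N = 5`, the displayed vector is an eigenvector of `H(α)` with eigenvalue
`−(5/4)(3+α²)`. -/
theorem psi5_eigenvector (α : ℝ) :
    Halpha 5 α (Psi5 α) = ((-(5 / 4) * (3 + α ^ 2) : ℝ) : ℂ) • Psi5 α := by
  funext μ
  rw [Pi.smul_apply, smul_eq_mul, Halpha]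
  have hΨ := isShiftInvariant_Psi5 α
  rcases Int.units_eq_one_or (∏ j, μ j) with hμ | hμ
  · rw [Hxyz_apply_eq_zero_of_prod_eq (fun _ => Psi5_eq_zero_of_prod_eq_one α) _ _ _ hμ,
      Psi5_eq_zero_of_prod_eq_one α hμ, mul_zero]
  have hHΨ := hΨ.map_Hxyz (1 + α) (1 - α) ((α ^ 2 - 1) / 2)
  rcases eq_or_isShiftOf_of_prod_eq_neg_one hμ with rfl | h | h | h
  · rw [hΨ.Hxyz_apply_cfgOfPlus_empty, Psi5_cfgOfPlus_three_four, Psi5_cfgOfPlus_empty]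
    push_cast
    ring
  · rw [hHΨ.eq_of_isShiftOf h, hΨ.eq_of_isShiftOf h, hΨ.Hxyz_apply_cfgOfPlus_three_four,
      Psi5_cfgOfPlus_empty, Psi5_cfgOfPlus_three_four, Psi5_cfgOfPlus_two_four,
      Psi5_cfgOfPlus_one_two_three_four]
    push_cast
    ring
  · rw [hHΨ.eq_of_isShiftOf h, hΨ.eq_of_isShiftOf h, hΨ.Hxyz_apply_cfgOfPlus_two_four,
      Psi5_cfgOfPlus_three_four, Psi5_cfgOfPlus_two_four, Psi5_cfgOfPlus_one_two_three_four]
    push_cast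
    ring
  · rw [hHΨ.eq_of_isShiftOf h, hΨ.eq_of_isShiftOf h, hΨ.Hxyz_apply_cfgOfPlus_one_two_three_four,
      Psi5_cfgOfPlus_three_four, Psi5_cfgOfPlus_two_four, Psi5_cfgOfPlus_one_two_three_four]
    push_cast
    ring
end

section
/- Let N be odd, α ∈ ℝ with α ≠ 1, and set α' = (α+3)/(α−1). Suppose v, w ∈ V_N are nonzero vectors such that H(α) v = E(α) v, H(α') w = E(α') w, both v(μ) = 0 and w(μ) = 0 whenever n₊(μ) is odd, w(−) ≠ 0 where (−) is the all-minus configuration, and the eigenspace {u ∈ V_N : H(α') u = E(α') u} has complex dimension exactly 2. Then R^y v = c · (w + I w), where c = (Σ_μ v(μ)) / (2^{N/2} w(−)) and (I w)(μ) = w(−μ). -/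
open Finset

/-- `n₊(μ)`: the number of sites `j` with `μ_j = +1`. -/
def nPlus {N : ℕ} [NeZero N] (μ : Config N) : ℕ :=
  (Finset.univ.filter (fun j => μ j = 1)).card

/-- The spin-inversion operator: `(I Ψ)(μ) = Ψ(−μ)`. -/
def invOp (N : ℕ) (Ψ : StateSpace N) : StateSpace N :=
  fun μ => Ψ (fun j => -(μ j))

/-- `E(α) = −(N/4)(3 + α²)`. -/
noncomputable def Eval (N : ℕ) (α : ℝ) : ℝ := -(N / 4 : ℝ) * (3 + α ^ 2)

/-- `m(μ,ν) = #{j : μ_j = −1 and ν_j = +1}`. -/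
def mCount {N : ℕ} [NeZero N] (μ ν : Config N) : ℕ :=
  (Finset.univ.filter (fun j => μ j = -1 ∧ ν j = 1)).card

/-- Rotation of every spin by π/2 about the y-axis:
`(Rʸ Ψ)(μ) = 2^{−N/2} Σ_ν (−1)^{m(μ,ν)} Ψ(ν)`. -/
noncomputable def Ry (N : ℕ) [NeZero N] (Ψ : StateSpace N) : StateSpace N :=
  fun μ => ((Real.sqrt 2 : ℂ) ^ N)⁻¹ * ∑ ν : Config N, (-1 : ℂ) ^ mCount μ ν * Ψ ν

/-- The periodic XYZ Hamiltonian as a linear operator on `V_N`. -/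
noncomputable def HxyzL (N : ℕ) [NeZero N] (Jx Jy Jz : ℝ) : Module.End ℂ (StateSpace N) where
  toFun := Hxyz N Jx Jy Jz
  map_add' Ψ Φ := by
    funext μ
    simp only [Hxyz, Pi.add_apply, mul_add, add_mul, Finset.sum_add_distrib]
    ring
  map_smul' c Ψ := by
    funext μ
    simp only [Hxyz, Pi.smul_apply, smul_eq_mul, RingHom.id_apply, mul_add, add_mul,
      Finset.mul_sum, Finset.sum_add_distrib]
    congr 1 <;> exact Finset.sum_congr rfl (fun j _ => by ring)

/-- `H(α)` as a linear operator on `V_N`. -/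
noncomputable def HalphaL (N : ℕ) [NeZero N] (α : ℝ) : Module.End ℂ (StateSpace N) :=
  HxyzL N (1 + α) (1 - α) ((α ^ 2 - 1) / 2)

/-!
The rotation `Rʸ` turns each `σˣ_j` into `σᶻ_j` and each `σᶻ_j` into `-σˣ_j`, so it exchanges the
couplings `Jx` and `Jz`. The exchanged couplings of `H(α)` are `k = (α - 1)² / 4` times those of
`H(α')`, and likewise `E(α) = k E(α')`; hence `Rʸ v` is an `E(α')`-eigenvector of `H(α')`. For odd
`N`, `w` vanishes at the all-plus configuration, so evaluation at the all-minus and all-plus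
configurations is, up to scalars, dual to the basis `w`, `I w` of the two-dimensional eigenspace.
Both values of `Rʸ v` equal `2^{-N/2} Σ_μ v(μ)`, as only configurations with even `n₊`
contribute.
-/

section Algebra

lemma semiconjBy_sum_right {ι R : Type*} [NonUnitalNonAssocSemiring R] {s : Finset ι} {a : R}
    {f g : ι → R} (h : ∀ i ∈ s, SemiconjBy a (f i) (g i)) :
    SemiconjBy a (∑ i ∈ s, f i) (∑ i ∈ s, g i) := by
  rw [SemiconjBy, mul_sum, sum_mul]
  exact sum_congr rfl h

lemma semiconjBy_mul_of_semiconjBy_neg {R : Type*} [Semigroup R] [HasDistribNeg R]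
    {a x y x' y' : R} (h : SemiconjBy a x (-y)) (h' : SemiconjBy a x' (-y')) :
    SemiconjBy a (x * x') (y * y') :=
  neg_mul_neg y y' ▸ h.mul_right h'

lemma prod_univ_eq_mul_of_eq_of_ne {ι M : Type*} [Fintype ι] [CommMonoid M]
    {f g : ι → M} {j : ι} {c : M} (hj : f j = c * g j) (h : ∀ i ≠ j, f i = g i) :
    ∏ i, f i = c * ∏ i, g i := by
  classical
  rw [← mul_prod_erase univ f (mem_univ j), ← mul_prod_erase univ g (mem_univ j), hj, mul_assoc,
    prod_congr rfl fun i hi => h i (ne_of_mem_erase hi)]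

lemma apply_mem_eigenspace_of_semiconjBy {R M : Type*} [CommRing R] [AddCommGroup M] [Module R M]
    {T f g : Module.End R M} (h : SemiconjBy T f g) {c : R} {x : M}
    (hx : x ∈ f.eigenspace c) : T x ∈ g.eigenspace c := by
  rw [Module.End.mem_eigenspace_iff] at hx ⊢
  rw [← Module.End.mul_apply, ← h.eq, Module.End.mul_apply, hx, map_smul]

lemma eigenspace_smul {R M : Type*} [CommRing R] [IsDomain R] [AddCommGroup M] [Module R M]
    [Module.IsTorsionFree R M] {k : R} (hk : k ≠ 0) (f : Module.End R M) (c : R) :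
    (k • f).eigenspace (k * c) = f.eigenspace c := by
  ext x
  rw [Module.End.mem_eigenspace_iff, Module.End.mem_eigenspace_iff, LinearMap.smul_apply, mul_smul,
    (smul_right_injective M hk).eq_iff]

lemma eq_smul_add_smul_of_finrank_eq_two {K V : Type*} [DivisionRing K] [AddCommGroup V]
    [Module K V] {S : Submodule K V} (hS : Module.finrank K S = 2) {x y u : V} (hx : x ∈ S)
    (hy : y ∈ S) (hu : u ∈ S) {f g : V →ₗ[K] K} (hfx : f x ≠ 0) (hfy : f y = 0) (hgx : g x = 0)
    (hgy : g y ≠ 0) : u = (f u / f x) • x + (g u / g y) • y := by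
  have hli : LinearIndependent K ![x, y] := LinearIndependent.pair_iff.2 fun a b hab => by
    have hf : f (a • x + b • y) = 0 := by rw [hab, map_zero]
    have hg : g (a • x + b • y) = 0 := by rw [hab, map_zero]
    simpa [hfx, hfy, hgx, hgy] using And.intro hf hg
  have : FiniteDimensional K S := Module.finite_of_finrank_eq_succ hS
  have hspan : Submodule.span K (Set.range ![x, y]) = S :=
    Submodule.eq_of_le_of_finrank_eq
      (Submodule.span_le.2 (by simp [Set.insert_subset_iff, hx, hy]))
      (by rw [finrank_span_eq_card hli, hS, Fintype.card_fin])
  rw [← hspan, Matrix.range_cons_cons_empty, Submodule.mem_span_pair] at hu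
  obtain ⟨a, b, rfl⟩ := hu
  simp [hfx, hfy, hgx, hgy]

end Algebra

section Configuration

variable {N : ℕ}

lemma flipAt_flipAt (μ : Config N) (j : ZMod N) : flipAt (flipAt μ j) j = μ := by
  simp [flipAt]

lemma flipAt_involutive (j : ZMod N) : Function.Involutive fun μ : Config N => flipAt μ j :=
  (flipAt_flipAt · j)

lemma flipAt_neg (μ : Config N) (j : ZMod N) : flipAt (-μ) j = -flipAt μ j := by
  ext1 i
  rcases eq_or_ne i j with rfl | h <;> simp [flipAt, *]

lemma spin_neg (μ : Config N) (j : ZMod N) : spin (-μ) j = -spin μ j := by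
  simp [spin]

lemma spin_flipPair_mul_spin_flipPair (μ : Config N) (j : ZMod N) :
    spin (flipPair μ j) j * spin (flipPair μ j) (j + 1) = spin μ j * spin μ (j + 1) := by
  rcases eq_or_ne (j + 1) j with h | h
  · rw [flipPair, h, flipAt_flipAt]
  · simp [flipPair, flipAt, spin, h, h.symm]

lemma nPlus_one (N : ℕ) [NeZero N] : nPlus (fun _ : ZMod N => 1) = N := by
  simp [nPlus]

end Configuration

section Pauli

variable {N : ℕ}

/-- The Pauli operator `σˣ_j` acting at site `j`. -/
def pauliX (j : ZMod N) : Module.End ℂ (StateSpace N) :=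
  LinearMap.funLeft ℂ ℂ fun μ => flipAt μ j

/-- The Pauli operator `σᶻ_j` acting at site `j`. -/
def pauliZ (j : ZMod N) : Module.End ℂ (StateSpace N) :=
  LinearMap.mulLeft ℂ fun μ => spin μ j

lemma pauliX_apply (j : ZMod N) (Ψ : StateSpace N) (μ : Config N) :
    pauliX j Ψ μ = Ψ (flipAt μ j) := rfl

lemma pauliZ_apply (j : ZMod N) (Ψ : StateSpace N) (μ : Config N) :
    pauliZ j Ψ μ = spin μ j * Ψ μ := rfl

lemma commute_pauliX_mul_pauliZ_mul (j : ZMod N) :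
    Commute (pauliX j * pauliX (j + 1)) (pauliZ j * pauliZ (j + 1)) := by
  refine LinearMap.ext fun Ψ => funext fun μ => ?_
  have h := spin_flipPair_mul_spin_flipPair μ j
  simp only [flipPair] at h
  simp only [Module.End.mul_apply, pauliX_apply, pauliZ_apply, ← mul_assoc, h]

-- The `Jy` term is `σʸ_j σʸ_{j+1} = -σᶻ_j σᶻ_{j+1} σˣ_j σˣ_{j+1}`, written without `σʸ` because
-- the signs differ when `N = 1`, where the two sites coincide.
lemma HxyzL_eq_sum_pauli [NeZero N] (Jx Jy Jz : ℝ) :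
    HxyzL N Jx Jy Jz = -(1 / 2 : ℂ) • ∑ j, ((Jx : ℂ) • (pauliX j * pauliX (j + 1))
      + (Jz : ℂ) • (pauliZ j * pauliZ (j + 1))
      - (Jy : ℂ) • (pauliZ j * pauliZ (j + 1) * (pauliX j * pauliX (j + 1)))) := by
  refine LinearMap.ext fun Ψ => funext fun μ => ?_
  change Hxyz N Jx Jy Jz Ψ μ = _
  simp only [Hxyz, flipPair, LinearMap.smul_apply, LinearMap.sum_apply, LinearMap.add_apply,
    LinearMap.sub_apply, Module.End.mul_apply, Pi.smul_apply, Finset.sum_apply, Pi.add_apply,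
    Pi.sub_apply, pauliX_apply, pauliZ_apply, smul_eq_mul]
  congr 1
  exact sum_congr rfl fun j _ => by ring

end Pauli

section Hamiltonian

lemma Eval_eq_mul_Eval (N : ℕ) {α : ℝ} (hα : α ≠ 1) :
    Eval N α = (α - 1) ^ 2 / 4 * Eval N ((α + 3) / (α - 1)) := by
  have h : α - 1 ≠ 0 := sub_ne_zero.2 hα
  simp only [Eval]
  field_simp
  ring

variable {N : ℕ} [NeZero N]

lemma HxyzL_mul_couplings (k Jx Jy Jz : ℝ) :
    HxyzL N (k * Jx) (k * Jy) (k * Jz) = (k : ℂ) • HxyzL N Jx Jy Jz := by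
  simp only [HxyzL_eq_sum_pauli, smul_comm (k : ℂ) (-(1 / 2) : ℂ), smul_sum, smul_add, smul_sub,
    Complex.ofReal_mul, mul_smul]

lemma HxyzL_swap_eq_smul_HalphaL {α : ℝ} (hα : α ≠ 1) :
    HxyzL N ((α ^ 2 - 1) / 2) (1 - α) (1 + α) =
      (((α - 1) ^ 2 / 4 : ℝ) : ℂ) • HalphaL N ((α + 3) / (α - 1)) := by
  have h : α - 1 ≠ 0 := sub_ne_zero.2 hα
  rw [HalphaL, ← HxyzL_mul_couplings]
  congr 1 <;> field_simp <;> ring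

end Hamiltonian

section Inversion

variable {N : ℕ}

/-- The spin inversion `invOp` as a linear operator on `V_N`. -/
def invOpL (N : ℕ) : Module.End ℂ (StateSpace N) :=
  LinearMap.funLeft ℂ ℂ Neg.neg

lemma commute_invOpL_pauliX (j : ZMod N) : Commute (invOpL N) (pauliX j) := by
  refine LinearMap.ext fun Ψ => funext fun μ => ?_
  exact congrArg Ψ (flipAt_neg μ j)

lemma semiconjBy_invOpL_pauliZ (j : ZMod N) :
    SemiconjBy (invOpL N) (pauliZ j) (-pauliZ j) := by
  refine LinearMap.ext fun Ψ => funext fun μ => ?_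
  change spin (-μ) j * Ψ (-μ) = -(spin μ j * Ψ (-μ))
  rw [spin_neg, neg_mul]

variable [NeZero N]

lemma commute_invOpL_HxyzL (Jx Jy Jz : ℝ) : Commute (invOpL N) (HxyzL N Jx Jy Jz) := by
  have hX (j : ZMod N) : Commute (invOpL N) (pauliX j * pauliX (j + 1)) :=
    (commute_invOpL_pauliX j).mul_right (commute_invOpL_pauliX (j + 1))
  have hZ (j : ZMod N) : Commute (invOpL N) (pauliZ j * pauliZ (j + 1)) :=
    semiconjBy_mul_of_semiconjBy_neg (semiconjBy_invOpL_pauliZ j) (semiconjBy_invOpL_pauliZ (j + 1))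
  rw [HxyzL_eq_sum_pauli]
  exact (Commute.sum_right _ _ _ fun j _ => (((hX j).smul_right _).add_right
    ((hZ j).smul_right _)).sub_right (((hZ j).mul_right (hX j)).smul_right _)).smul_right _

lemma eq_smul_add_smul_invOp_of_mem_eigenspace {Jx Jy Jz : ℝ} {E : ℂ}
    (hdim : Module.finrank ℂ ((HxyzL N Jx Jy Jz).eigenspace E) = 2) {w u : StateSpace N}
    (hw : w ∈ (HxyzL N Jx Jy Jz).eigenspace E) (hu : u ∈ (HxyzL N Jx Jy Jz).eigenspace E)
    (hw_neg : w (fun _ => -1) ≠ 0) (hw_pos : w (fun _ => 1) = 0) :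
    u = (u (fun _ => -1) / w (fun _ => -1)) • w
      + (u (fun _ => 1) / w (fun _ => -1)) • invOp N w := by
  have hIw : invOpL N w ∈ (HxyzL N Jx Jy Jz).eigenspace E :=
    apply_mem_eigenspace_of_semiconjBy (commute_invOpL_HxyzL Jx Jy Jz) hw
  exact eq_smul_add_smul_of_finrank_eq_two hdim hw hIw hu
    (f := LinearMap.proj fun _ => -1) (g := LinearMap.proj fun _ => 1) hw_neg hw_pos hw_pos hw_neg

end Inversion

section Rotation

variable {N : ℕ} [NeZero N]

/-- The matrix of the rotation of one spin by `π/2` about the `y`-axis, without its prefactor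
`1/√2`; rows are indexed by `s` and columns by `t`. -/
def rotationEntry (s t : ℤˣ) : ℂ := if s = -1 ∧ t = 1 then -1 else 1

lemma rotationEntry_neg_right (s t : ℤˣ) : rotationEntry s (-t) = (s : ℤ) * rotationEntry s t := by
  rcases Int.units_eq_one_or s with rfl | rfl <;> rcases Int.units_eq_one_or t with rfl | rfl <;>
    simp [rotationEntry]

lemma rotationEntry_neg_left (s t : ℤˣ) : rotationEntry (-s) t = -(t : ℤ) * rotationEntry s t := by
  rcases Int.units_eq_one_or s with rfl | rfl <;> rcases Int.units_eq_one_or t with rfl | rfl <;>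
    simp [rotationEntry]

lemma neg_one_pow_mCount_eq_prod (μ ν : Config N) :
    (-1 : ℂ) ^ mCount μ ν = ∏ j, rotationEntry (μ j) (ν j) := by
  simp only [rotationEntry, prod_ite, prod_const, one_pow, mul_one, mCount]

lemma neg_one_pow_mCount_flipAt_right (μ ν : Config N) (j : ZMod N) :
    (-1 : ℂ) ^ mCount μ (flipAt ν j) = spin μ j * (-1 : ℂ) ^ mCount μ ν := by
  rw [neg_one_pow_mCount_eq_prod, neg_one_pow_mCount_eq_prod]
  refine prod_univ_eq_mul_of_eq_of_ne (j := j) ?_ fun i hi => ?_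
  · rw [flipAt, Function.update_self, rotationEntry_neg_right, spin]
  · rw [flipAt, Function.update_of_ne hi]

lemma neg_one_pow_mCount_flipAt_left (μ ν : Config N) (j : ZMod N) :
    (-1 : ℂ) ^ mCount (flipAt μ j) ν = -spin ν j * (-1 : ℂ) ^ mCount μ ν := by
  rw [neg_one_pow_mCount_eq_prod, neg_one_pow_mCount_eq_prod]
  refine prod_univ_eq_mul_of_eq_of_ne (j := j) ?_ fun i hi => ?_
  · rw [flipAt, Function.update_self, rotationEntry_neg_left, spin]
  · rw [flipAt, Function.update_of_ne hi]

/-- The rotation `Ry` as a linear operator on `V_N`. -/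
noncomputable def RyL (N : ℕ) [NeZero N] : Module.End ℂ (StateSpace N) where
  toFun := Ry N
  map_add' Ψ Φ := by
    funext μ
    simp only [Ry, Pi.add_apply, mul_add, sum_add_distrib]
  map_smul' c Ψ := by
    funext μ
    simp only [Ry, Pi.smul_apply, smul_eq_mul, RingHom.id_apply, mul_sum, mul_left_comm c]

lemma RyL_apply (Ψ : StateSpace N) (μ : Config N) :
    RyL N Ψ μ = ((Real.sqrt 2 : ℂ) ^ N)⁻¹ * ∑ ν : Config N, (-1 : ℂ) ^ mCount μ ν * Ψ ν := rfl

lemma semiconjBy_RyL_pauliX (j : ZMod N) : SemiconjBy (RyL N) (pauliX j) (pauliZ j) := by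
  refine LinearMap.ext fun Ψ => funext fun μ => ?_
  have hsum : ∑ ν, (-1 : ℂ) ^ mCount μ ν * Ψ (flipAt ν j) =
      ∑ ν, (-1 : ℂ) ^ mCount μ (flipAt ν j) * Ψ ν := by
    simpa only [flipAt_flipAt] using (flipAt_involutive j).bijective.sum_comp
      fun ν => (-1 : ℂ) ^ mCount μ (flipAt ν j) * Ψ ν
  simp only [Module.End.mul_apply, RyL_apply, pauliX_apply, pauliZ_apply, hsum,
    neg_one_pow_mCount_flipAt_right, mul_assoc, ← mul_sum]
  rw [mul_left_comm]

lemma semiconjBy_RyL_pauliZ (j : ZMod N) : SemiconjBy (RyL N) (pauliZ j) (-pauliX j) := by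
  refine LinearMap.ext fun Ψ => funext fun μ => ?_
  simp only [Module.End.mul_apply, LinearMap.neg_apply, Pi.neg_apply, RyL_apply, pauliX_apply,
    pauliZ_apply, neg_one_pow_mCount_flipAt_left, neg_mul, sum_neg_distrib, mul_neg, neg_neg,
    mul_left_comm, mul_assoc]

lemma semiconjBy_RyL_HxyzL (Jx Jy Jz : ℝ) :
    SemiconjBy (RyL N) (HxyzL N Jx Jy Jz) (HxyzL N Jz Jy Jx) := by
  have hX (j : ZMod N) :
      SemiconjBy (RyL N) (pauliX j * pauliX (j + 1)) (pauliZ j * pauliZ (j + 1)) :=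
    (semiconjBy_RyL_pauliX j).mul_right (semiconjBy_RyL_pauliX (j + 1))
  have hZ (j : ZMod N) :
      SemiconjBy (RyL N) (pauliZ j * pauliZ (j + 1)) (pauliX j * pauliX (j + 1)) :=
    semiconjBy_mul_of_semiconjBy_neg (semiconjBy_RyL_pauliZ j) (semiconjBy_RyL_pauliZ (j + 1))
  have hY (j : ZMod N) :
      SemiconjBy (RyL N) (pauliZ j * pauliZ (j + 1) * (pauliX j * pauliX (j + 1)))
        (pauliZ j * pauliZ (j + 1) * (pauliX j * pauliX (j + 1))) := by
    simpa only [(commute_pauliX_mul_pauliZ_mul j).eq] using (hZ j).mul_right (hX j)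
  rw [HxyzL_eq_sum_pauli, HxyzL_eq_sum_pauli]
  refine (semiconjBy_sum_right fun j _ => ?_).smul_right _
  rw [add_comm ((Jz : ℂ) • _)]
  exact (((hX j).smul_right _).add_right ((hZ j).smul_right _)).sub_right ((hY j).smul_right _)

lemma RyL_mem_eigenspace_HalphaL {α : ℝ} (hα : α ≠ 1) {v : StateSpace N}
    (hv : v ∈ (HalphaL N α).eigenspace ((Eval N α : ℝ) : ℂ)) :
    RyL N v ∈ (HalphaL N ((α + 3) / (α - 1))).eigenspace
      ((Eval N ((α + 3) / (α - 1)) : ℝ) : ℂ) := by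
  have hk : (((α - 1) ^ 2 / 4 : ℝ) : ℂ) ≠ 0 :=
    Complex.ofReal_ne_zero.2 (by have := sub_ne_zero.2 hα; positivity)
  have h := apply_mem_eigenspace_of_semiconjBy (semiconjBy_RyL_HxyzL _ _ _) hv
  rwa [HxyzL_swap_eq_smul_HalphaL hα, Eval_eq_mul_Eval N hα, Complex.ofReal_mul,
    eigenspace_smul hk] at h

lemma RyL_apply_one (Ψ : StateSpace N) :
    RyL N Ψ (fun _ => 1) = ((Real.sqrt 2 : ℂ) ^ N)⁻¹ * ∑ μ, Ψ μ := by
  simp [RyL_apply, mCount, show (1 : ℤˣ) ≠ -1 by decide]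

lemma RyL_apply_neg_one {Ψ : StateSpace N} (hΨ : ∀ μ : Config N, Odd (nPlus μ) → Ψ μ = 0) :
    RyL N Ψ (fun _ => -1) = ((Real.sqrt 2 : ℂ) ^ N)⁻¹ * ∑ μ, Ψ μ := by
  rw [RyL_apply]
  congr 1
  refine sum_congr rfl fun ν _ => ?_
  have hcount : mCount (fun _ => -1) ν = nPlus ν := by simp [mCount, nPlus]
  rcases Nat.even_or_odd (nPlus ν) with h | h
  · rw [hcount, h.neg_one_pow, one_mul]
  · rw [hΨ ν h, mul_zero]

end Rotation

/-- `Rʸ v = c · (w + I w)` with `c = (Σ_μ v(μ)) / (2^{N/2} w(−⋯−))`. -/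
theorem Ry_of_eigenvector (N : ℕ) [NeZero N]
    (hN : Odd N) (α : ℝ) (hα : α ≠ 1)
    (v w : StateSpace N) (hv0 : v ≠ 0) (hw0 : w ≠ 0)
    (hv : Halpha N α v = ((Eval N α : ℝ) : ℂ) • v)
    (hw : Halpha N ((α + 3) / (α - 1)) w = ((Eval N ((α + 3) / (α - 1)) : ℝ) : ℂ) • w)
    (hvpar : ∀ μ : Config N, Odd (nPlus μ) → v μ = 0)
    (hwpar : ∀ μ : Config N, Odd (nPlus μ) → w μ = 0)
    (hwm : w (fun _ => -1) ≠ 0)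
    (hdim : Module.finrank ℂ
      (Module.End.eigenspace (HalphaL N ((α + 3) / (α - 1)))
        ((Eval N ((α + 3) / (α - 1)) : ℝ) : ℂ)) = 2) :
    Ry N v = ((∑ μ : Config N, v μ) / ((Real.sqrt 2 : ℂ) ^ N * w (fun _ => -1)))
      • (w + invOp N w) := by
  have hw_pos : w (fun _ => 1) = 0 := hwpar _ (by rwa [nPlus_one])
  have hRv := RyL_mem_eigenspace_HalphaL hα (Module.End.mem_eigenspace_iff.2 hv)
  have hdecomp := eq_smul_add_smul_invOp_of_mem_eigenspace hdim
    (Module.End.mem_eigenspace_iff.2 hw) hRv hwm hw_pos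
  rw [RyL_apply_one, RyL_apply_neg_one hvpar, ← smul_add, ← div_eq_inv_mul, div_div] at hdecomp
  exact hdecomp
end
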